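/- Let G be a finite simple graph with maximum degree at most 3 that contains K_{2,3} as a subgraph. Then R(G) ≤ 1, i.e., |λ_h(G)| ≤ 1 and |λ_l(G)| ≤ 1 with h = ⌊(n+1)/2⌋, l = ⌈(n+1)/2⌉, where n = |V(G)|. -/

import Mathlib

open SimpleGraph Matrix

theorem adjMatrix_isHermitian {V : Type} [Fintype V] [DecidableEq V]
    (G : SimpleGraph V) [DecidableRel G.Adj] : (G.adjMatrix ℝ).IsHermitian := by
  ext i j
  simp [Matrix.conjTranspose_apply, SimpleGraph.adj_comm]

/-- Multiset of adjacency eigenvalues. -/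
noncomputable def adjSpectrum {V : Type} [Fintype V] [DecidableEq V]
    (G : SimpleGraph V) [DecidableRel G.Adj] : Multiset ℝ :=
  Finset.univ.val.map (adjMatrix_isHermitian G).eigenvalues

/-- the i-th largest adjacency eigenvalue (1-indexed). -/
noncomputable def eigval {V : Type} [Fintype V] [DecidableEq V]
    (G : SimpleGraph V) [DecidableRel G.Adj] (i : ℕ) : ℝ :=
  ((adjSpectrum G).sort (· ≤ ·)).getD (Fintype.card V - i) 0

/-!
An *unfriendly* bipartition of `G` (every vertex has at most half of its neighbours on its own side)
exists by local optimality: minimise `∑ v, ∑ u ~ v, c v * c u` over all sign vectors `c`. On vectors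
supported on one side, the adjacency form is that of a graph of maximum degree at most
`d = ⌊Δ(G) / 2⌋`, so it is bounded by `d * ‖x‖ ^ 2` in absolute value. By Sylvester's law of inertia
the number of eigenvalues above `d`, and likewise below `-d`, is at most the size of either side,
hence at most `n / 2`.

The `K_{2,3}` makes this strict. In a subcubic graph its two vertices of degree three are twins
`x`, `y`: they have the same neighbours, so `e_x - e_y` is in the kernel of the adjacency matrix.
The bipartition can be chosen with `x` and `y` on the same side, and `e_x - e_y` then enlarges the
space of vectors supported on the other side, on which the form is bounded, by one dimension.
-/

section Inertia

open QuadraticMap QuadraticForm Module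
open scoped Finset

theorem two_mul_sigPos_lt_finrank {𝕜 M : Type*} [Field 𝕜] [LinearOrder 𝕜] [IsStrictOrderedRing 𝕜]
    [AddCommGroup M] [Module 𝕜 M] [FiniteDimensional 𝕜 M] {Q : QuadraticForm 𝕜 M}
    {W W' : Submodule 𝕜 M} (hWW' : IsCompl W W') (hW : ∀ x ∈ W, Q x ≤ 0) (hW' : ∀ x ∈ W', Q x ≤ 0)
    {z : M} (hz : z ∈ W') (hz₀ : z ≠ 0) (hWz : ∀ x ∈ W, Q.IsOrtho x z) :
    2 * sigPos Q < finrank 𝕜 M := by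
  have hWspan : ∀ x ∈ W ⊔ 𝕜 ∙ z, Q x ≤ 0 := by
    intro x hx
    obtain ⟨u, hu, _, hw, rfl⟩ := Submodule.mem_sup.mp hx
    obtain ⟨a, rfl⟩ := Submodule.mem_span_singleton.mp hw
    have hortho : Q.IsOrtho u (a • z) := by
      simpa only [smul_eq_mul, mul_zero] using
        isOrtho_polarBilin.mp (by simp [(hWz u hu).polar_eq_zero])
    rw [hortho]
    exact add_nonpos (hW u hu) (hW' _ (W'.smul_mem a hz))
  have hdim : finrank 𝕜 ↥(W ⊔ 𝕜 ∙ z) = finrank 𝕜 W + 1 := by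
    rw [← finrank_span_singleton (K := 𝕜) hz₀]
    have hdisj : Disjoint W (𝕜 ∙ z) :=
      hWW'.disjoint.mono_right ((Submodule.span_singleton_le_iff_mem z W').mpr hz)
    rw [← Submodule.finrank_sup_add_finrank_inf_eq, hdisj.eq_bot, finrank_bot, add_zero]
  have hcompl := Submodule.finrank_add_eq_of_isCompl hWW'
  have hsup := sigPos_add_finrank_le_of_nonpos hWspan
  have hW'bound := sigPos_add_finrank_le_of_nonpos hW'
  omega

theorem isCompl_spanSubset_compl {ι : Type*} (R : Type*) [Finite ι] [Ring R] [Nontrivial R]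
    (s : Set ι) :
    IsCompl (Pi.spanSubset R s) (Pi.spanSubset R sᶜ) := by
  refine ⟨(Pi.basisFun R ι).linearIndependent.disjoint_span_image disjoint_compl_right, ?_⟩
  rw [codisjoint_iff, Pi.spanSubset, Pi.spanSubset, ← Submodule.span_union, ← Set.image_union,
    Set.union_compl_self, Set.image_univ, Basis.span_eq]

theorem toQuadraticForm'_sub_smul_one_apply {n R : Type*} [Fintype n] [DecidableEq n] [CommRing R]
    (A : Matrix n n R) (t : R) (x : n → R) :
    (A - t • 1).toQuadraticForm' x = x ⬝ᵥ A *ᵥ x - t * (x ⬝ᵥ x) := by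
  simp [Matrix.toQuadraticForm', Matrix.toLinearMap₂'_apply']

variable {n : Type*} [Fintype n] [DecidableEq n] {A : Matrix n n ℝ}

theorem dotProduct_eigenvectorBasis (hA : A.IsHermitian) (i j : n) :
    (hA.eigenvectorBasis i).ofLp ⬝ᵥ (hA.eigenvectorBasis j).ofLp = if i = j then 1 else 0 := by
  simpa [EuclideanSpace.inner_eq_star_dotProduct, dotProduct_comm] using
    orthonormal_iff_ite.mp hA.eigenvectorBasis.orthonormal i j

theorem equivalent_weightedSumSquares_eigenvalues_sub (hA : A.IsHermitian) (t : ℝ) :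
    (A - t • 1).toQuadraticForm'.Equivalent
      (weightedSumSquares ℝ fun i => hA.eigenvalues i - t) := by
  let b : Basis n ℝ (n → ℝ) :=
    hA.eigenvectorBasis.toBasis.map (WithLp.linearEquiv 2 ℝ (n → ℝ))
  have hb (i : n) : b i = (hA.eigenvectorBasis i).ofLp := by simp [b]
  have hortho : (associated (R := ℝ) (A - t • 1).toQuadraticForm').IsOrthoᵢ b := by
    intro i j hij
    simp [Function.onFun, Matrix.toQuadraticForm', associated_toQuadraticMap,
      Matrix.toLinearMap₂'_apply', hb, hA.mulVec_eigenvectorBasis, dotProduct_eigenvectorBasis,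
      hij, hij.symm]
  have hdiag (i : n) : (A - t • 1).toQuadraticForm' (b i) = hA.eigenvalues i - t := by
    simp [toQuadraticForm'_sub_smul_one_apply, hb, hA.mulVec_eigenvectorBasis,
      dotProduct_eigenvectorBasis]
  have hrepr := basisRepr_eq_of_iIsOrtho _ b hortho
  simp only [hdiag] at hrepr
  exact hrepr ▸ ⟨isometryEquivBasisRepr _ b⟩

theorem sigPos_sub_smul_one (hA : A.IsHermitian) (t : ℝ) :
    sigPos (A - t • 1).toQuadraticForm' = #{i | t < hA.eigenvalues i} := by
  rw [sigPos_of_equiv_weightedSumSquares (equivalent_weightedSumSquares_eigenvalues_sub hA t),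
    ← Set.ncard_coe_finset]
  simp

theorem sigNeg_sub_smul_one (hA : A.IsHermitian) (t : ℝ) :
    sigNeg (A - t • 1).toQuadraticForm' = #{i | hA.eigenvalues i < t} := by
  rw [sigNeg_of_equiv_weightedSumSquares (equivalent_weightedSumSquares_eigenvalues_sub hA t),
    ← Set.ncard_coe_finset]
  simp

theorem two_mul_sigPos_sub_smul_one_lt_card (hA : A.IsSymm) {t : ℝ} {s : Set n}
    (hs : ∀ x ∈ Pi.spanSubset ℝ s, x ⬝ᵥ A *ᵥ x ≤ t * (x ⬝ᵥ x))
    (hsc : ∀ x ∈ Pi.spanSubset ℝ sᶜ, x ⬝ᵥ A *ᵥ x ≤ t * (x ⬝ᵥ x))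
    {z : n → ℝ} (hz : z ∈ Pi.spanSubset ℝ sᶜ) (hz₀ : z ≠ 0) (hAz : A *ᵥ z = 0) :
    2 * sigPos (A - t • 1).toQuadraticForm' < Fintype.card n := by
  rw [← finrank_fintype_fun_eq_card ℝ]
  refine two_mul_sigPos_lt_finrank (isCompl_spanSubset_compl ℝ s) (fun x hx => ?_)
    (fun x hx => ?_) hz hz₀ fun x hx => ?_
  · rw [toQuadraticForm'_sub_smul_one_apply]
    exact sub_nonpos.mpr (hs x hx)
  · rw [toQuadraticForm'_sub_smul_one_apply]
    exact sub_nonpos.mpr (hsc x hx)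
  · have hxz : x ⬝ᵥ z = 0 := Finset.sum_eq_zero fun i _ => by
      by_cases hi : i ∈ s
      · rw [Pi.mem_spanSubset_iff.mp hz i (not_not_intro hi), mul_zero]
      · rw [Pi.mem_spanSubset_iff.mp hx i hi, zero_mul]
    have hzA : z ⬝ᵥ A *ᵥ x = 0 := by
      rw [dotProduct_mulVec, ← mulVec_transpose, hA.eq, hAz, zero_dotProduct]
    rw [isOrtho_def]
    simp only [toQuadraticForm'_sub_smul_one_apply, mulVec_add, add_dotProduct, dotProduct_add,
      hAz, hzA, hxz, dotProduct_comm z x, dotProduct_zero]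
    ring

theorem two_mul_card_eigenvalues_lt_card (hA : A.IsHermitian) {t : ℝ} {s : Set n}
    (hs : ∀ x ∈ Pi.spanSubset ℝ s, |x ⬝ᵥ A *ᵥ x| ≤ t * (x ⬝ᵥ x))
    (hsc : ∀ x ∈ Pi.spanSubset ℝ sᶜ, |x ⬝ᵥ A *ᵥ x| ≤ t * (x ⬝ᵥ x))
    {z : n → ℝ} (hz : z ∈ Pi.spanSubset ℝ sᶜ) (hz₀ : z ≠ 0) (hAz : A *ᵥ z = 0) :
    2 * #{i | t < hA.eigenvalues i} < Fintype.card n ∧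
      2 * #{i | hA.eigenvalues i < -t} < Fintype.card n := by
  have hsymm : A.IsSymm := isHermitian_iff_isSymm.mp hA
  constructor
  · rw [← sigPos_sub_smul_one]
    exact two_mul_sigPos_sub_smul_one_lt_card hsymm (fun x hx => (le_abs_self _).trans (hs x hx))
      (fun x hx => (le_abs_self _).trans (hsc x hx)) hz hz₀ hAz
  · have hneg : -(A - (-t) • 1).toQuadraticForm' = (-A - t • 1).toQuadraticForm' := by
      ext x
      simp only [_root_.neg_apply, toQuadraticForm'_sub_smul_one_apply, neg_mulVec,
        dotProduct_neg]
      ring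
    rw [← sigNeg_sub_smul_one, ← sigPos_neg, hneg]
    refine two_mul_sigPos_sub_smul_one_lt_card hsymm.neg (fun x hx => ?_) (fun x hx => ?_) hz hz₀
      (by rw [neg_mulVec, hAz, neg_zero]) <;> rw [neg_mulVec, dotProduct_neg]
    · exact (neg_le_abs _).trans (hs x hx)
    · exact (neg_le_abs _).trans (hsc x hx)

end Inertia

section Unfriendly

variable {V : Type*} (G : SimpleGraph V)

/-- The spanning subgraph of `G` formed by the edges whose ends have the same colour under `c`; it
measures how far `c` is from a proper colouring. -/
def monochromatic {α : Type*} (c : V → α) : SimpleGraph V where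
  Adj u v := G.Adj u v ∧ c u = c v
  symm := ⟨fun _ _ h => ⟨h.1.symm, h.2.symm⟩⟩
  loopless := ⟨fun _ h => G.irrefl h.1⟩

@[simp]
theorem monochromatic_adj {α : Type*} (c : V → α) (u v : V) :
    (monochromatic G c).Adj u v ↔ G.Adj u v ∧ c u = c v :=
  Iff.rfl

instance {α : Type*} [DecidableEq α] [DecidableRel G.Adj] (c : V → α) :
    DecidableRel (monochromatic G c).Adj :=
  fun _ _ => instDecidableAnd

variable [Fintype V] [DecidableRel G.Adj]

/-- Unfriendly partition: the colour classes of `c` are its parts, and every vertex has at most half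
of its neighbours in its own part. -/
def IsUnfriendly {α : Type*} [DecidableEq α] (c : V → α) : Prop :=
  ∀ v, 2 * (monochromatic G c).degree v ≤ G.degree v

/-- The number of neighbours of `v` in its own part minus the number in the other part, for the
bipartition encoded by the signs `c`. Summed over all vertices, it is the energy which unfriendly
partitions minimise locally. -/
def alignment (c : V → ℤˣ) (v : V) : ℤ :=
  c v * ∑ u ∈ G.neighborFinset v, (c u : ℤ)

theorem two_mul_degree_monochromatic (c : V → ℤˣ) (v : V) :
    2 * ((monochromatic G c).degree v : ℤ) = G.degree v + alignment G c v := by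
  have hnbr : (monochromatic G c).neighborFinset v =
      {u ∈ G.neighborFinset v | c v = c u} := by
    ext u
    simp
  have hterm (u : V) : (2 : ℤ) * (if c v = c u then 1 else 0) = 1 + c v * c u := by
    rcases Int.units_eq_one_or (c v) with hv | hv <;>
      rcases Int.units_eq_one_or (c u) with hu | hu <;> simp [hv, hu]
  rw [← card_neighborFinset_eq_degree, hnbr, Finset.natCast_card_filter, Finset.mul_sum,
    Finset.sum_congr rfl fun u _ => hterm u, Finset.sum_add_distrib, ← Finset.mul_sum, alignment]
  simp

theorem sum_alignment (c : V → ℤˣ) :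
    ∑ v, alignment G c v = (fun v => (c v : ℤ)) ⬝ᵥ G.adjMatrix ℤ *ᵥ (fun v => (c v : ℤ)) := by
  simp [alignment, dotProduct]

theorem sum_alignment_update_neg [DecidableEq V] (c : V → ℤˣ) (v : V) :
    ∑ u, alignment G (Function.update c v (-c v)) u =
      ∑ u, alignment G c u - 4 * alignment G c v := by
  set s : V → ℤ := fun u => c u
  have hflip : (fun u => (Function.update c v (-c v) u : ℤ)) = s - Pi.single v (2 * s v) := by
    ext u
    rcases eq_or_ne u v with rfl | huv
    · simp only [Function.update_self, Units.val_neg, Pi.sub_apply, Pi.single_eq_same, s]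
      ring
    · simp [s, huv]
  have hsymm : s ⬝ᵥ G.adjMatrix ℤ *ᵥ Pi.single v (2 * s v) =
      Pi.single v (2 * s v) ⬝ᵥ G.adjMatrix ℤ *ᵥ s := by
    rw [dotProduct_mulVec, ← mulVec_transpose, transpose_adjMatrix, dotProduct_comm]
  have hsingle : Pi.single v (2 * s v) ⬝ᵥ G.adjMatrix ℤ *ᵥ s = 2 * alignment G c v := by
    simp [alignment, s, mul_assoc]
  have hdiag : Pi.single v (2 * s v) ⬝ᵥ G.adjMatrix ℤ *ᵥ Pi.single v (2 * s v) = 0 := by simp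
  rw [sum_alignment, sum_alignment, hflip, mulVec_sub, sub_dotProduct, dotProduct_sub,
    dotProduct_sub, hsymm, hsingle, hdiag]
  ring

variable {G}

theorem isUnfriendly_of_sum_alignment_le {c : V → ℤˣ}
    (hc : ∀ c' : V → ℤˣ, ∑ v, alignment G c v ≤ ∑ v, alignment G c' v) : IsUnfriendly G c := by
  classical
  intro v
  have hflip := hc (Function.update c v (-c v))
  rw [sum_alignment_update_neg] at hflip
  have := two_mul_degree_monochromatic G c v
  omega

theorem exists_isUnfriendly_of_neighborFinset_eq {x y : V}
    (hxy : G.neighborFinset x = G.neighborFinset y) :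
    ∃ c : V → ℤˣ, IsUnfriendly G c ∧ c x = c y := by
  classical
  obtain ⟨c, hc⟩ := Finite.exists_min fun c : V → ℤˣ => ∑ v, alignment G c v
  by_cases hcxy : c x = c y
  · exact ⟨c, isUnfriendly_of_sum_alignment_le hc, hcxy⟩
  rw [← ne_eq, Int.units_ne_iff_eq_neg] at hcxy
  have hopposite : alignment G c x = -alignment G c y := by
    simp [alignment, hxy, hcxy]
  have hflipx := hc (Function.update c x (-c x))
  have hflipy := hc (Function.update c y (-c y))
  rw [sum_alignment_update_neg] at hflipx hflipy
  refine ⟨Function.update c y (-c y), isUnfriendly_of_sum_alignment_le fun c' => ?_, ?_⟩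
  · rw [sum_alignment_update_neg]
    linarith [hc c']
  · rcases eq_or_ne x y with rfl | hne
    · rfl
    · simp [hne, hcxy]

theorem abs_dotProduct_adjMatrix_mulVec_le_of_degree_le {R : Type*} [Field R] [LinearOrder R]
    [IsStrictOrderedRing R] {d : ℕ} (hd : ∀ v, G.degree v ≤ d) (x : V → R) :
    |x ⬝ᵥ G.adjMatrix R *ᵥ x| ≤ d * (x ⬝ᵥ x) := by
  have hadj (f : V → R) : ∑ u, ∑ v, (if G.Adj u v then f u else 0) = ∑ u, G.degree u * f u := by
    refine Finset.sum_congr rfl fun u _ => ?_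
    rw [degree_eq_sum_if_adj, Finset.sum_mul]
    simp
  calc |x ⬝ᵥ G.adjMatrix R *ᵥ x|
      = |∑ u, ∑ v, if G.Adj u v then x u * x v else 0| := by rw [dotProduct_mulVec_adjMatrix]
    _ ≤ ∑ u, ∑ v, |if G.Adj u v then x u * x v else 0| :=
        (Finset.abs_sum_le_sum_abs _ _).trans
          (Finset.sum_le_sum fun u _ => Finset.abs_sum_le_sum_abs _ _)
    _ ≤ ∑ u, ∑ v, ((if G.Adj u v then x u ^ 2 / 2 else 0) +
          if G.Adj v u then x v ^ 2 / 2 else 0) := by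
        gcongr with u _ v _
        simp only [G.adj_comm v u]
        split_ifs
        · rw [abs_mul, ← sq_abs (x u), ← sq_abs (x v)]
          linarith [two_mul_le_add_sq |x u| |x v|]
        · simp
    _ = ∑ u, G.degree u * x u ^ 2 := by
        simp only [Finset.sum_add_distrib]
        rw [Finset.sum_comm (f := fun u v => if G.Adj v u then x v ^ 2 / 2 else 0),
          hadj, ← Finset.sum_add_distrib]
        exact Finset.sum_congr rfl fun u _ => by ring
    _ ≤ d * (x ⬝ᵥ x) := by
        rw [dotProduct, Finset.mul_sum]
        gcongr with u
        · exact_mod_cast hd u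
        · rw [sq]

theorem dotProduct_adjMatrix_mulVec_eq_monochromatic {R α : Type*} [Ring R] [DecidableEq α]
    {c : V → α} {k : α} {x : V → R} (hx : x ∈ Pi.spanSubset R (c ⁻¹' {k})) :
    x ⬝ᵥ G.adjMatrix R *ᵥ x = x ⬝ᵥ (monochromatic G c).adjMatrix R *ᵥ x := by
  have hzero (v : V) (hv : c v ≠ k) : x v = 0 := Pi.mem_spanSubset_iff.mp hx v hv
  simp only [dotProduct_mulVec_adjMatrix]
  refine Finset.sum_congr rfl fun u _ => Finset.sum_congr rfl fun v _ => ?_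
  by_cases hu : c u = k <;> by_cases hv : c v = k <;> simp [hu, hv, hzero]

theorem IsUnfriendly.abs_dotProduct_adjMatrix_mulVec_le {α : Type*} [DecidableEq α] {c : V → α}
    (hc : IsUnfriendly G c) {k : α} {x : V → ℝ} (hx : x ∈ Pi.spanSubset ℝ (c ⁻¹' {k})) :
    |x ⬝ᵥ G.adjMatrix ℝ *ᵥ x| ≤ (G.maxDegree / 2 : ℕ) * (x ⬝ᵥ x) := by
  rw [dotProduct_adjMatrix_mulVec_eq_monochromatic hx]
  refine abs_dotProduct_adjMatrix_mulVec_le_of_degree_le (fun v => ?_) x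
  have hv := hc v
  have hmax := G.degree_le_maxDegree v
  omega

theorem adjMatrix_mulVec_single_sub_single_eq_zero (R : Type*) [Ring R] [DecidableEq V] {x y : V}
    (hxy : G.neighborFinset x = G.neighborFinset y) :
    G.adjMatrix R *ᵥ (Pi.single x 1 - Pi.single y 1) = 0 := by
  ext v
  have hadj : G.Adj v x ↔ G.Adj v y := by
    rw [G.adj_comm v x, G.adj_comm v y, ← mem_neighborFinset, hxy, mem_neighborFinset]
  simp [hadj]

end Unfriendly

theorem getElem_le_of_countP_lt {α : Type*} [LinearOrder α] {L : List α}
    (hL : L.Pairwise (· ≤ ·)) {t : α} {k : ℕ} (hk : k < L.length)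
    (h : L.countP (t < ·) + k < L.length) : L[k] ≤ t := by
  by_contra! htk
  have hdrop : (L.drop k).countP (t < ·) = (L.drop k).length := by
    rw [List.countP_eq_length, List.drop_eq_getElem_cons hk]
    have := hL.drop (i := k)
    rw [List.drop_eq_getElem_cons hk, List.pairwise_cons] at this
    simp only [List.mem_cons, decide_eq_true_eq, forall_eq_or_imp]
    exact ⟨htk, fun a ha => htk.trans_le (this.1 a ha)⟩
  have hsub := (List.drop_sublist k L).countP_le (p := (t < ·))
  rw [hdrop, List.length_drop] at hsub
  omega

theorem le_getElem_of_countP_le {α : Type*} [LinearOrder α] {L : List α}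
    (hL : L.Pairwise (· ≤ ·)) {t : α} {k : ℕ} (hk : k < L.length)
    (h : L.countP (· < t) ≤ k) : t ≤ L[k] := by
  by_contra! hkt
  have htake : (L.take (k + 1)).countP (· < t) = (L.take (k + 1)).length := by
    have hsorted := hL.take (i := k + 1)
    rw [List.take_succ_eq_append_getElem hk, List.pairwise_append] at hsorted
    rw [List.countP_eq_length, List.take_succ_eq_append_getElem hk]
    simp only [List.mem_append, List.mem_singleton, decide_eq_true_eq]
    rintro a (ha | rfl)
    · exact (hsorted.2.2 a ha _ (List.mem_singleton_self _)).trans_lt hkt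
    · exact hkt
  have hsub := (List.take_sublist (k + 1) L).countP_le (p := (· < t))
  rw [htake, List.length_take] at hsub
  omega

section Eigval

open scoped Finset

variable {V : Type} [Fintype V] [DecidableEq V] (G : SimpleGraph V) [DecidableRel G.Adj]

theorem length_sort_adjSpectrum :
    ((adjSpectrum G).sort (· ≤ ·)).length = Fintype.card V := by
  simp [adjSpectrum, Finset.card_univ]

theorem countP_sort_adjSpectrum (p : ℝ → Prop) [DecidablePred p] :
    ((adjSpectrum G).sort (· ≤ ·)).countP (p ·) =
      #{v | p ((adjMatrix_isHermitian G).eigenvalues v)} := by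
  rw [← Multiset.coe_countP, Multiset.sort_eq, adjSpectrum, Multiset.countP_map]
  rfl

variable {G} {i : ℕ} {t : ℝ}

theorem eigval_le_of_card_lt (hi : i ≤ Fintype.card V)
    (h : #{v | t < (adjMatrix_isHermitian G).eigenvalues v} < i) :
    eigval G i ≤ t := by
  have hlen := length_sort_adjSpectrum G
  have hcount := countP_sort_adjSpectrum G (t < ·)
  rw [eigval, List.getD_eq_getElem _ _ (by omega)]
  exact getElem_le_of_countP_lt (Multiset.pairwise_sort _ _) _ (by omega)

theorem le_eigval_of_card_add_le (hi : 1 ≤ i)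
    (h : #{v | (adjMatrix_isHermitian G).eigenvalues v < t} + i ≤ Fintype.card V) :
    t ≤ eigval G i := by
  have hlen := length_sort_adjSpectrum G
  have hcount := countP_sort_adjSpectrum G (· < t)
  rw [eigval, List.getD_eq_getElem _ _ (by omega)]
  exact le_getElem_of_countP_le (Multiset.pairwise_sort _ _) _ (by omega)

theorem abs_eigval_le (hi : i ≤ Fintype.card V)
    (hlarge : #{v | t < (adjMatrix_isHermitian G).eigenvalues v} < i)
    (hsmall : #{v | (adjMatrix_isHermitian G).eigenvalues v < -t} + i ≤ Fintype.card V) :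
    |eigval G i| ≤ t :=
  abs_le.mpr ⟨le_eigval_of_card_add_le (by omega) hsmall, eigval_le_of_card_lt hi hlarge⟩

end Eigval

theorem hl_index_le_one_of_subcubic_with_K23_subgraph_general
    {V : Type} [Fintype V] [DecidableEq V] (G : SimpleGraph V) [DecidableRel G.Adj]
    {x y : V} (hne : x ≠ y) (hxy : G.neighborFinset x = G.neighborFinset y) :
    |eigval G ((Fintype.card V + 1) / 2)| ≤ (G.maxDegree / 2 : ℕ) ∧
    |eigval G ((Fintype.card V + 2) / 2)| ≤ (G.maxDegree / 2 : ℕ) := by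
  obtain ⟨c, hc, hcxy⟩ := exists_isUnfriendly_of_neighborFinset_eq hxy
  have hcompl : (c ⁻¹' {-c x})ᶜ = c ⁻¹' {c x} := by
    ext v
    simp [← ne_eq, Int.units_ne_iff_eq_neg]
  have htwins : Pi.single x 1 - Pi.single y 1 ∈ Pi.spanSubset ℝ (c ⁻¹' {c x}) := by
    refine Pi.mem_spanSubset_iff.mpr fun v hv => ?_
    have hvx : v ≠ x := fun h => hv (congrArg c h)
    have hvy : v ≠ y := fun h => hv ((congrArg c h).trans hcxy.symm)
    simp [hvx, hvy]
  have htwins₀ : (Pi.single x 1 - Pi.single y 1 : V → ℝ) ≠ 0 := fun h => by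
    simpa [hne] using congrFun h x
  obtain ⟨hlarge, hsmall⟩ := two_mul_card_eigenvalues_lt_card (adjMatrix_isHermitian G)
    (fun _ => hc.abs_dotProduct_adjMatrix_mulVec_le)
    (fun _ hu => hc.abs_dotProduct_adjMatrix_mulVec_le (hcompl ▸ hu))
    (hcompl ▸ htwins) htwins₀ (adjMatrix_mulVec_single_sub_single_eq_zero ℝ hxy)
  constructor <;> exact abs_eigval_le (by omega) (by omega) (by omega)

theorem hl_index_le_one_of_subcubic_with_K23_subgraph
    {V : Type} [Fintype V] [DecidableEq V]
    (G : SimpleGraph V) [DecidableRel G.Adj]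
    (hdeg : ∀ v : V, G.degree v ≤ 3)
    (x₁ x₂ y₁ y₂ y₃ : V)
    (hnodup : ([x₁, x₂, y₁, y₂, y₃] : List V).Nodup)
    (h11 : G.Adj x₁ y₁) (h12 : G.Adj x₁ y₂) (h13 : G.Adj x₁ y₃)
    (h21 : G.Adj x₂ y₁) (h22 : G.Adj x₂ y₂) (h23 : G.Adj x₂ y₃) :
    |eigval G ((Fintype.card V + 1) / 2)| ≤ 1 ∧
    |eigval G ((Fintype.card V + 2) / 2)| ≤ 1 := by
  have hdistinct : x₁ ≠ x₂ ∧ y₁ ≠ y₂ ∧ y₁ ≠ y₃ ∧ y₂ ≠ y₃ := by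
    simp only [List.nodup_cons, List.mem_cons, not_or] at hnodup
    tauto
  obtain ⟨hx, hy₁₂, hy₁₃, hy₂₃⟩ := hdistinct
  have hneighbors (x : V) (h₁ : G.Adj x y₁) (h₂ : G.Adj x y₂) (h₃ : G.Adj x y₃) :
      {y₁, y₂, y₃} = G.neighborFinset x := by
    refine Finset.eq_of_subset_of_card_le (by simp [Finset.insert_subset_iff, h₁, h₂, h₃]) ?_
    rw [Finset.card_eq_three.mpr ⟨y₁, y₂, y₃, hy₁₂, hy₁₃, hy₂₃, rfl⟩]
    exact hdeg x
  have htwins := (hneighbors x₁ h11 h12 h13).symm.trans (hneighbors x₂ h21 h22 h23)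
  have hmax : ((G.maxDegree / 2 : ℕ) : ℝ) ≤ 1 := by
    have := G.maxDegree_le_of_forall_degree_le 3 hdeg
    exact_mod_cast (by omega : G.maxDegree / 2 ≤ 1)
  exact (hl_index_le_one_of_subcubic_with_K23_subgraph_general G hx htwins).imp
    hmax.trans' hmax.trans'
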